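/- Suppose n is even. Then for all nonnegative integers i, j with 2i + j ≤ 2n, the following identity holds in A: O(2n−2i−j, i, j) = λ^{i+j}·O(j−1, i+1, 2n−2i−j−1) if j is odd; O(2n−2i−j, i, j) = λ^{i+j}·O(j+1, i−1, 2n−2i−j+1) if j is even and i ≠ 0; and O(2n−2i−j, i, j) = λ^{i+j}·O(j, 0, 2n−j) if j is even and i = 0. -/

import Mathlib

/-!
Setting: `lam n = exp(2πi/n)` is a primitive `n`-th root of unity in `ℂ`.
`DUAlg` is the graded down-up algebra `A(0,1) = ℂ⟨u,d⟩/(d²u - ud², du² - u²d)`,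
with generators `uGen`, `dGen`.  The automorphism `g` (of order `2n`) is
determined by `g u = d`, `g d = lam n • u`, and generates the cyclic group `G`,
so that the fixed subring `A^G` is `{a | g a = a}`.  The orbit sum is
`orbitSum n a b c = u^a (du)^b d^c + (lam n)^(b+c) • (d^a (ud)^b u^c)`.
-/

noncomputable section

/-- `lam n = exp(2πi/n)`, a primitive `n`-th root of unity. -/
def lam (n : ℕ) : ℂ := Complex.exp (2 * (Real.pi : ℂ) * Complex.I / (n : ℂ))

/-- The defining relations of the down-up algebra `A(0,1)`:
`d²u = ud²` and `du² = u²d` (here `0` plays the role of `u`, `1` of `d`). -/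
inductive DownUpRel : FreeAlgebra ℂ (Fin 2) → FreeAlgebra ℂ (Fin 2) → Prop
  | rel1 : DownUpRel (FreeAlgebra.ι ℂ 1 * FreeAlgebra.ι ℂ 1 * FreeAlgebra.ι ℂ 0)
      (FreeAlgebra.ι ℂ 0 * FreeAlgebra.ι ℂ 1 * FreeAlgebra.ι ℂ 1)
  | rel2 : DownUpRel (FreeAlgebra.ι ℂ 1 * FreeAlgebra.ι ℂ 0 * FreeAlgebra.ι ℂ 0)
      (FreeAlgebra.ι ℂ 0 * FreeAlgebra.ι ℂ 0 * FreeAlgebra.ι ℂ 1)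

/-- The graded down-up algebra `A(0,1)`. -/
abbrev DUAlg : Type := RingQuot DownUpRel

/-- The generator `u` of `A(0,1)`. -/
def uGen : DUAlg := RingQuot.mkAlgHom ℂ DownUpRel (FreeAlgebra.ι ℂ 0)

/-- The generator `d` of `A(0,1)`. -/
def dGen : DUAlg := RingQuot.mkAlgHom ℂ DownUpRel (FreeAlgebra.ι ℂ 1)

/-- Orbit sum `O(a,b,c) = u^a (du)^b d^c + λ^(b+c) d^a (ud)^b u^c`. -/
def orbitSum (n a b c : ℕ) : DUAlg :=
  uGen ^ a * (dGen * uGen) ^ b * dGen ^ c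
    + (lam n ^ (b + c)) • (dGen ^ a * (uGen * dGen) ^ b * uGen ^ c)

theorem dd_u : dGen * dGen * uGen = uGen * dGen * dGen := by
  have := RingQuot.mkAlgHom_rel ℂ DownUpRel.rel1
  simpa only [map_mul, uGen, dGen] using this

theorem d_uu : dGen * uGen * uGen = uGen * uGen * dGen := by
  have := RingQuot.mkAlgHom_rel ℂ DownUpRel.rel2
  simpa only [map_mul, uGen, dGen] using this

theorem comm_uu_d (k : ℕ) : Commute (uGen ^ (2 * k)) dGen := by
  rw [pow_mul]
  apply Commute.pow_left
  rw [Commute, SemiconjBy, pow_two, ← mul_assoc, d_uu]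

theorem comm_dd_u (k : ℕ) : Commute (dGen ^ (2 * k)) uGen := by
  rw [pow_mul]
  apply Commute.pow_left
  rw [Commute, SemiconjBy, pow_two, ← mul_assoc, dd_u]

theorem shift_pow {M : Type*} [Monoid M] (u d : M) (i : ℕ) :
    u * (d * u) ^ i * d = (u * d) ^ (i + 1) := by
  induction i with
  | zero => simp
  | succ i ih => rw [pow_succ, pow_succ _ (i + 1), ← ih]; simp only [mul_assoc]

theorem odd_swap {M : Type*} [Monoid M] (u d x y : M) (hxu : Commute x u) (hxd : Commute x d)
    (hyu : Commute y u) (hyd : Commute y d) (hxy : Commute x y) (i : ℕ) :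
    (x * u) * (d * u) ^ i * (y * d) = y * (u * d) ^ (i + 1) * x := by
  have h1 : Commute x ((u * d) ^ (i + 1)) := (hxu.mul_right hxd).pow_right _
  have h2 : Commute y (u * (d * u) ^ i) := hyu.mul_right ((hyd.mul_right hyu).pow_right _)
  calc (x * u) * (d * u) ^ i * (y * d) = x * ((u * (d * u) ^ i) * y) * d := by
        simp only [mul_assoc]
    _ = (x * y) * (u * (d * u) ^ i * d) := by rw [← h2.eq]; simp only [mul_assoc]
    _ = y * (x * (u * d) ^ (i + 1)) := by rw [shift_pow, hxy.eq, mul_assoc]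
    _ = _ := by rw [h1.eq, mul_assoc]

theorem ud_swap (k m i : ℕ) :
    uGen ^ (2 * k + 1) * (dGen * uGen) ^ i * dGen ^ (2 * m + 1) =
      dGen ^ (2 * m) * (uGen * dGen) ^ (i + 1) * uGen ^ (2 * k) := by
  rw [pow_succ, pow_succ]
  exact odd_swap _ _ _ _ (Commute.pow_self _ _) (comm_uu_d k) (comm_dd_u m)
    (Commute.pow_self _ _) ((comm_uu_d k).pow_right _) i

theorem du_swap (k m i : ℕ) :
    dGen ^ (2 * k + 1) * (uGen * dGen) ^ i * uGen ^ (2 * m + 1) =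
      uGen ^ (2 * m) * (dGen * uGen) ^ (i + 1) * dGen ^ (2 * k) := by
  rw [pow_succ, pow_succ]
  exact odd_swap _ _ _ _ (Commute.pow_self _ _) (comm_dd_u k) (comm_uu_d m)
    (Commute.pow_self _ _) ((comm_dd_u k).pow_right _) i

theorem lam_pow (n : ℕ) (hn : 0 < n) : lam n ^ (2 * n) = 1 := by
  have h : lam n ^ n = 1 := (Complex.isPrimitiveRoot_exp n hn.ne').pow_eq_one
  rw [mul_comm, pow_mul, h, one_pow]

/-- Abstract form: matching of the two summands gives the identity. -/
theorem orbit_match (n : ℕ) (hn : 0 < n) (a b c a' b' c' : ℕ)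
    (hdeg : b + c + (b' + c') = 2 * n)
    (h1 : uGen ^ a * (dGen * uGen) ^ b * dGen ^ c = dGen ^ a' * (uGen * dGen) ^ b' * uGen ^ c')
    (h2 : dGen ^ a * (uGen * dGen) ^ b * uGen ^ c = uGen ^ a' * (dGen * uGen) ^ b' * dGen ^ c') :
    orbitSum n a b c = (lam n ^ (b + c)) • orbitSum n a' b' c' := by
  unfold orbitSum
  rw [h1, h2, smul_add, smul_smul, ← pow_add, hdeg, lam_pow n hn, one_smul, add_comm]

/-- For `n` even and `2i + j ≤ 2n`, a degree-`2n` orbit sum whose triple is not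
in the chosen basis can be rewritten (formula (3.1) of the paper). -/
theorem orbitSum_rewrite_even (n : ℕ) (hn : 0 < n) (hne : Even n)
    (i j : ℕ) (hij : 2 * i + j ≤ 2 * n) :
    (Odd j →
      orbitSum n (2 * n - 2 * i - j) i j =
        (lam n ^ (i + j)) • orbitSum n (j - 1) (i + 1) (2 * n - 2 * i - j - 1)) ∧
    (Even j → i ≠ 0 →
      orbitSum n (2 * n - 2 * i - j) i j =
        (lam n ^ (i + j)) • orbitSum n (j + 1) (i - 1) (2 * n - 2 * i - j + 1)) ∧
    (Even j → i = 0 →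
      orbitSum n (2 * n - 2 * i - j) i j =
        (lam n ^ (i + j)) • orbitSum n j 0 (2 * n - j)) := by
  refine ⟨?_, ?_, ?_⟩
  · rintro ⟨m, rfl⟩
    obtain ⟨k, hk⟩ : ∃ k, 2 * n - 2 * i - (2 * m + 1) = 2 * k + 1 := ⟨n - i - m - 1, by omega⟩
    rw [hk]
    simp only [Nat.add_sub_cancel]
    exact orbit_match n hn _ _ _ _ _ _ (by omega) (ud_swap k m i) (du_swap k m i)
  · rintro hj hi
    obtain ⟨m, rfl⟩ := hj.two_dvd
    obtain ⟨i, rfl⟩ := Nat.exists_eq_succ_of_ne_zero hi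
    obtain ⟨k, hk⟩ : ∃ k, 2 * n - 2 * (i + 1) - 2 * m = 2 * k := ⟨n - (i + 1) - m, by omega⟩
    simp only [Nat.succ_eq_add_one] at *
    rw [hk]
    simp only [Nat.add_sub_cancel]
    exact orbit_match n hn _ _ _ _ _ _ (by omega) (du_swap m k i).symm (ud_swap m k i).symm
  · rintro hj rfl
    obtain ⟨m, rfl⟩ := hj.two_dvd
    obtain ⟨k, hk⟩ : ∃ k, 2 * n - 2 * m = 2 * k := ⟨n - m, by omega⟩
    simp only [mul_zero, Nat.sub_zero]
    rw [hk]
    refine orbit_match n hn _ _ _ _ _ _ (by omega) ?_ ?_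
    · simpa using ((comm_uu_d k).pow_right (2 * m)).eq
    · simpa using ((comm_dd_u k).pow_right (2 * m)).eq
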